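/- Let n ≥ 2, let V be a nonempty set of monomials of degree d in K[x_1,…,x_n], let u = gcd(V), and fix i ∈ {1, …, n}. Then |MV| = |K_i(V)|^{<n−1>} + |D_i(V)|^{<n−2>} holds if and only if all of the following hold: K_i(V) is a Gotzmann set of K[x_1,…,x_n], the set (1/u)D_i(V) is a Gotzmann set of the polynomial ring K[x_1,…,x_{i−1},x_{i+1},…,x_n] in n−1 variables (i.e. |\overline{M_i} D_i(V)| = |D_i(V)|^{<n−2>}), and x_i D_i(V) ⊆ \overline{M_i} K_i(V). -/

import Mathlib

/-!
Monomials are exponent vectors. Let `a` be the least exponent of `x_i` in `V`, so that `D = D_i(V)`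
consists of the members with `x_i`-exponent `a` and `K = K_i(V)` of the others. In the growth `MV`
the monomials with `x_i`-exponent `a` are exactly the products of `D` with the variables other than
`x_i`, hence (`card_shad_eq`)

`|MV| = |M̄_i D| + |MK ∪ x_i D|`.

By Macaulay's lower bound (`macUp_card_le_card_shadOn`), `|M̄_i D| ≥ |D|^{<n-2>}` and
`|MK ∪ x_i D| ≥ |MK| ≥ |K|^{<n-1>}`. So the equality in the theorem holds iff all these
inequalities are equalities, and the first inequality of the second chain is an equality iff
`x_i D ⊆ MK`, which for reasons of `x_i`-exponents means `x_i D ⊆ M̄_i K`.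

Macaulay's bound is proved by induction with the same decomposition. Since `x_i V = x_i K ∪ x_i D`
lies in `MK ∪ x_i D`, the latter has at least `max (|K|^{<m+1>}, |K| + |D|)` elements, and the
induction closes by the numerical inequality (`macUp_add_le`)

`(k + d)^{<m+1>} ≤ max (k^{<m+1>}, k + d) + d^{<m>}`.

Writing `h^{<m>} = h + ∂_m h`, where `∂_m` is the Kruskal–Katona shadow function, this is the
Eckhoff–Wegner inequality `∂_{m+1} (k + d) ≤ max (∂_{m+1} k, d) + ∂_m d`. It is proved by induction
on `m` by comparing the leading terms of the binomial representations of `k` and `d`, together with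
two companions: `∂_m` is subadditive, and `∂_m C + ∂_m (x + y - C) ≤ ∂_m x + ∂_m y` for a binomial
coefficient `C = C(a, m)` with `x, y ≤ C ≤ x + y`. The companions of index `m + 1` follow from
those of index `m` by decomposing the arguments so that the Eckhoff–Wegner inequality is sharp
(`exists_split`).
-/


open Finset

/-- `macUp n h` is `h^{<n>}`, computed via the greedy (Macaulay) binomial
representation `h = C(a_n, n) + C(a_{n-1}, n-1) + ⋯` (equivalently
`h = C(h(n)+n, n) + ⋯ + C(h(i)+i, i)` with `h(n) ≥ ⋯ ≥ h(i) ≥ 0`), giving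
`h^{<n>} = C(a_n+1, n) + C(a_{n-1}+1, n-1) + ⋯`; `macUp n 0 = 0`, `macUp 0 1 = 1`. -/
def macUp : ℕ → ℕ → ℕ
  | 0, h => h
  | n+1, h =>
    if h = 0 then 0
    else
      let a := Nat.findGreatest (fun a => Nat.choose a (n+1) ≤ h) (h + n + 1)
      Nat.choose (a+1) (n+1) + macUp n (h - Nat.choose a (n+1))
/-- Monomials in `K[x_1,…,x_n]` are identified with their exponent vectors
`Fin n → ℕ`; the degree of `v` is `∑ i, v i`.  `shad V` is the set
`MV = {x_j v : v ∈ V, 1 ≤ j ≤ n}`. -/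
def shad {n : ℕ} (V : Finset (Fin n → ℕ)) : Finset (Fin n → ℕ) :=
  (Finset.univ ×ˢ V).image fun p => p.2 + Pi.single p.1 1
/-- `mulVar i V` is `x_i V = {x_i v : v ∈ V}`. -/
def mulVar {n : ℕ} (i : Fin n) (V : Finset (Fin n → ℕ)) : Finset (Fin n → ℕ) :=
  V.image fun v => v + Pi.single i 1
/-- `shadExcept i W` is `\overline{M_i} W = {x_j w : w ∈ W, j ≠ i}`. -/
def shadExcept {n : ℕ} (i : Fin n) (W : Finset (Fin n → ℕ)) : Finset (Fin n → ℕ) :=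
  ((Finset.univ.erase i) ×ˢ W).image fun p => p.2 + Pi.single p.1 1
/-- `gcd(V)` of a set of monomials: the exponentwise minimum. -/
noncomputable def gcdMon {n : ℕ} (V : Finset (Fin n → ℕ)) : Fin n → ℕ :=
  fun i => sInf ((fun v => v i) '' (V : Set (Fin n → ℕ)))
open Classical in
/-- `K_i(V)`: for `|V| ≤ 1` it is `V`; otherwise the set of monomials of `V`
divisible by `x_i · gcd(V)`. -/
noncomputable def Kset {n : ℕ} (V : Finset (Fin n → ℕ)) (i : Fin n) : Finset (Fin n → ℕ) :=
  if V.card ≤ 1 then V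
  else V.filter fun v => ∀ j, gcdMon V j + (Pi.single i 1 : Fin n → ℕ) j ≤ v j

/-- `D_i(V) = V \ K_i(V)`. -/
noncomputable def Dset {n : ℕ} (V : Finset (Fin n → ℕ)) (i : Fin n) : Finset (Fin n → ℕ) :=
  V \ Kset V i

/-! ### Arithmetic of the Macaulay growth function -/

lemma macUp_zero_right (m : ℕ) : macUp m 0 = 0 := by
  cases m <;> simp [macUp]

lemma le_choose_add (m a : ℕ) : a ≤ a.choose (m + 1) + m := by
  induction a with
  | zero => simp
  | succ a ih =>
    rw [Nat.choose_succ_succ']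
    rcases le_or_gt m a with h | h
    · have := Nat.choose_pos h
      omega
    · omega

/-- The leading term of the binomial representation of a positive integer. -/
lemma exists_choose_add (m : ℕ) {h : ℕ} (hh : 0 < h) :
    ∃ a r, m + 1 ≤ a ∧ r < a.choose m ∧ h = a.choose (m + 1) + r := by
  induction h, hh using Nat.le_induction with
  | base => exact ⟨m + 1, 0, le_rfl, by simp, by simp⟩
  | succ h hh ih =>
    obtain ⟨a, r, ha, hr, rfl⟩ := ih
    rcases Nat.lt_or_ge (r + 1) (a.choose m) with h1 | h1
    · exact ⟨a, r + 1, ha, h1, by omega⟩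
    · refine ⟨a + 1, 0, by omega, Nat.choose_pos (by omega), ?_⟩
      have := Nat.choose_succ_succ a m
      simp only [Nat.succ_eq_add_one] at this
      omega

lemma macUp_choose_add_of_lt {m a r : ℕ} (ha : m + 1 ≤ a) (hr : r < a.choose m) :
    macUp (m + 1) (a.choose (m + 1) + r) = (a + 1).choose (m + 1) + macUp m r := by
  have hpos := Nat.choose_pos ha
  have hg : Nat.findGreatest (fun b => Nat.choose b (m + 1) ≤ a.choose (m + 1) + r)
      (a.choose (m + 1) + r + m + 1) = a := by
    rw [Nat.findGreatest_eq_iff]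
    refine ⟨?_, fun _ => Nat.le_add_right _ _, fun b hb _ => ?_⟩
    · have := le_choose_add m a
      omega
    · have h1 : (a + 1).choose (m + 1) ≤ b.choose (m + 1) := Nat.choose_le_choose _ hb
      have h2 := Nat.choose_succ_succ a m
      simp only [Nat.succ_eq_add_one] at h2
      omega
  rw [macUp, if_neg (by omega)]
  simp only [hg, Nat.add_sub_cancel_left]

lemma le_macUp (m h : ℕ) : h ≤ macUp m h := by
  induction m generalizing h with
  | zero => simp [macUp]
  | succ m ih =>
    rcases Nat.eq_zero_or_pos h with rfl | hh
    · simp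
    obtain ⟨a, r, ha, hr, rfl⟩ := exists_choose_add m hh
    rw [macUp_choose_add_of_lt ha hr]
    have := ih r
    have := Nat.choose_le_succ a (m + 1)
    simp only [Nat.succ_eq_add_one] at this
    omega

/-- The excess `h^{<m>} - h`. Since `C(a+1, k) - C(a, k) = C(a, k-1)`, this is the
Kruskal–Katona shadow function `∑ C(a_j, j) ↦ ∑ C(a_j, j-1)`. The subtraction never truncates,
by `le_macUp`. -/
def growth (m h : ℕ) : ℕ := macUp m h - h

lemma macUp_eq_add_growth (m h : ℕ) : macUp m h = h + growth m h := by
  have := le_macUp m h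
  unfold growth
  omega

@[simp] lemma growth_zero_left (h : ℕ) : growth 0 h = 0 := by simp [growth, macUp]

@[simp] lemma growth_zero_right (m : ℕ) : growth m 0 = 0 := by simp [growth, macUp_zero_right]

lemma growth_choose_add_of_lt {m a r : ℕ} (ha : m + 1 ≤ a) (hr : r < a.choose m) :
    growth (m + 1) (a.choose (m + 1) + r) = a.choose m + growth m r := by
  have h1 := macUp_choose_add_of_lt ha hr
  rw [macUp_eq_add_growth, macUp_eq_add_growth m r, Nat.choose_succ_succ] at h1
  simp only [Nat.succ_eq_add_one] at h1
  omega

lemma growth_choose {m a : ℕ} (ha : m + 1 ≤ a) :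
    growth (m + 1) (a.choose (m + 1)) = a.choose m := by
  simpa using growth_choose_add_of_lt ha (Nat.choose_pos (show m ≤ a by omega))

/-- The recursion for `growth` also holds at the endpoint `r = C(a, m)`, where the greedy
representation of `C(a, m+1) + r` changes its leading term. -/
lemma growth_choose_add {m a r : ℕ} (ha : m + 1 ≤ a) (hr : r ≤ a.choose m) :
    growth (m + 1) (a.choose (m + 1) + r) = a.choose m + growth m r := by
  rcases hr.lt_or_eq with hr | rfl
  · exact growth_choose_add_of_lt ha hr
  · have h1 : a.choose (m + 1) + a.choose m = (a + 1).choose (m + 1) := by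
      rw [Nat.choose_succ_succ, add_comm]
    rw [h1, growth_choose (by omega)]
    cases m with
    | zero => simp
    | succ m => rw [growth_choose (by omega), Nat.choose_succ_succ, add_comm]

lemma growth_choose_add_le {m a r : ℕ} (ha : m ≤ a) (hr : r ≤ a.choose m) :
    growth (m + 1) (a.choose (m + 1) + r) ≤ a.choose m + growth m r := by
  rcases ha.lt_or_eq with ha | rfl
  · exact (growth_choose_add ha hr).le
  · simp only [Nat.choose_self] at hr
    have h0 : m.choose (m + 1) = 0 := by simp
    rw [h0, zero_add, Nat.choose_self]
    interval_cases r
    · simp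
    · have h1 := growth_choose (le_refl (m + 1))
      simp only [Nat.choose_self, Nat.choose_succ_self_right] at h1
      rw [h1]
      cases m with
      | zero => simp
      | succ m =>
        have h2 := growth_choose (le_refl (m + 1))
        simp only [Nat.choose_self, Nat.choose_succ_self_right] at h2
        omega

lemma growth_mono (m : ℕ) : Monotone (growth m) := by
  induction m with
  | zero => intro x y _; simp
  | succ m ih =>
    intro x y hxy
    rcases Nat.eq_zero_or_pos x with rfl | hx
    · simp
    obtain ⟨a, r, ha, hr, rfl⟩ := exists_choose_add m hx
    obtain ⟨b, s, hb, hs, rfl⟩ := exists_choose_add m (hx.trans_le hxy)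
    rcases lt_trichotomy a b with hab | rfl | hab
    · have h1 : growth (m + 1) (a.choose (m + 1) + r) ≤ a.choose m + growth m (a.choose m) := by
        rw [growth_choose_add ha hr.le]
        exact Nat.add_le_add_left (ih hr.le) _
      have h2 : a.choose m + growth m (a.choose m) = (a + 1).choose m := by
        have h3 : a.choose (m + 1) + a.choose m = (a + 1).choose (m + 1) := by
          rw [Nat.choose_succ_succ, add_comm]
        rw [← growth_choose_add ha le_rfl, h3, growth_choose (by omega)]
      have h4 : (a + 1).choose m ≤ b.choose m := Nat.choose_le_choose _ hab
      rw [growth_choose_add hb hs.le]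
      omega
    · rw [growth_choose_add ha hr.le, growth_choose_add ha hs.le]
      exact Nat.add_le_add_left (ih (by omega)) _
    · have h1 : (b + 1).choose (m + 1) ≤ a.choose (m + 1) := Nat.choose_le_choose _ hab
      have h2 := Nat.choose_succ_succ b m
      simp only [Nat.succ_eq_add_one] at h2
      omega

lemma growth_pos (m : ℕ) {h : ℕ} (hh : 0 < h) : 0 < growth (m + 1) h := by
  obtain ⟨a, r, ha, hr, rfl⟩ := exists_choose_add m hh
  rw [growth_choose_add ha hr.le]
  have := Nat.choose_pos (show m ≤ a by omega)
  omega

/-- Every `x` splits as `x = x₀ + x₁` so that the Eckhoff–Wegner inequality is an equality.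
For the initial segment of `x` sets, `x₀` and `x₁` count the members avoiding, respectively
containing, the first point of the ground set. -/
lemma exists_split (m : ℕ) {a x : ℕ} (hx : x ≤ (a + 1).choose (m + 1)) :
    ∃ x₀ x₁, x = x₀ + x₁ ∧ x₀ ≤ a.choose (m + 1) ∧ x₁ ≤ a.choose m ∧
      growth (m + 1) x₀ ≤ x₁ ∧ growth (m + 1) x = x₁ + growth m x₁ := by
  induction m generalizing a x with
  | zero =>
    rcases Nat.eq_zero_or_pos x with rfl | hx0
    · exact ⟨0, 0, by simp⟩
    have key : ∀ y, growth 1 (y + 1) = 1 := fun y => by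
      have := growth_choose_add (m := 0) (a := y + 1) (r := 0) (by omega) (by simp)
      simpa using this
    obtain ⟨y, rfl⟩ : ∃ y, x = y + 1 := ⟨x - 1, by omega⟩
    refine ⟨y, 1, rfl, ?_, by simp, ?_, by simp [key]⟩
    · simp only [zero_add, Nat.choose_one_right] at hx ⊢
      omega
    · cases y <;> simp [key]
  | succ m ih =>
    rcases Nat.eq_zero_or_pos x with rfl | hx0
    · exact ⟨0, 0, by simp⟩
    obtain ⟨b, r, hb, hr, rfl⟩ := exists_choose_add (m + 1) hx0
    obtain ⟨c, rfl⟩ : ∃ c, b = c + 1 := ⟨b - 1, by omega⟩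
    obtain ⟨r₀, r₁, rfl, hr₀, hr₁, hg₀, hg₁⟩ := ih hr.le
    have e1 := Nat.choose_succ_succ c m
    have e2 := Nat.choose_succ_succ c (m + 1)
    simp only [Nat.succ_eq_add_one] at e1 e2
    have hcase : c + 1 ≤ a ∨ c = a ∧ r₀ = 0 ∧ r₁ = 0 := by
      rcases lt_trichotomy c a with hca | rfl | hca
      · exact Or.inl hca
      · exact Or.inr ⟨rfl, by omega⟩
      · have h2 : (a + 1 + 1).choose (m + 1 + 1) ≤ (c + 1).choose (m + 1 + 1) :=
          Nat.choose_le_choose _ (by omega)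
        have h3 := Nat.choose_succ_succ (a + 1) (m + 1)
        simp only [Nat.succ_eq_add_one] at h3
        have h4 : (a + 1).choose (m + 1) = 0 := by omega
        rw [Nat.choose_eq_zero_iff] at h4
        rw [Nat.choose_eq_zero_of_lt (show a + 1 < m + 1 + 1 by omega)] at hx
        omega
    refine ⟨c.choose (m + 1 + 1) + r₀, c.choose (m + 1) + r₁, by omega, ?_, ?_, ?_, ?_⟩
    · rcases hcase with hca | ⟨rfl, rfl, rfl⟩
      · have : (c + 1).choose (m + 1 + 1) ≤ a.choose (m + 1 + 1) := Nat.choose_le_choose _ hca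
        omega
      · simp
    · rcases hcase with hca | ⟨rfl, rfl, rfl⟩
      · have : (c + 1).choose (m + 1) ≤ a.choose (m + 1) := Nat.choose_le_choose _ hca
        omega
      · simp
    · refine (growth_choose_add_le (by omega) hr₀).trans ?_
      omega
    · rw [growth_choose_add hb hr.le, hg₁, growth_choose_add (by omega) hr₁]
      omega

/-! ### The Eckhoff–Wegner inequality -/

/-- The Eckhoff–Wegner inequality for the shadow function of index `m + 1`. -/
def EckhoffWegner (m : ℕ) : Prop :=
  ∀ k d, growth (m + 1) (k + d) ≤ max (growth (m + 1) k) d + growth m d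

/-- Subadditivity of the shadow function of index `m`. -/
def GrowthSubadd (m : ℕ) : Prop :=
  ∀ x y, growth m (x + y) ≤ growth m x + growth m y

/-- Subadditivity of the shadow function of index `m` modulo a binomial coefficient `C(a, m)`:
if `x, y ≤ C(a, m)` and their sum overflows `C(a, m)`, then replacing `x, y` by `C(a, m)` and the
remainder does not increase the total. -/
def GrowthSubaddMod (m : ℕ) : Prop :=
  ∀ a x y : ℕ, x ≤ a.choose m → y ≤ a.choose m → a.choose m ≤ x + y →
    growth m (a.choose m) + growth m (x + y - a.choose m) ≤ growth m x + growth m y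

lemma eckhoffWegner_zero : EckhoffWegner 0 := by
  intro k d
  have key : ∀ y, growth 1 (y + 1) = 1 := fun y => by
    have := growth_choose_add (m := 0) (a := y + 1) (r := 0) (by omega) (by simp)
    simpa using this
  simp only [zero_add, growth_zero_left, add_zero]
  cases d with
  | zero => simp
  | succ d =>
    rw [← add_assoc, key]
    omega

lemma growthSubadd_succ {m : ℕ} (hE : EckhoffWegner m) (hS : GrowthSubadd m) :
    GrowthSubadd (m + 1) := by
  intro x
  induction x using Nat.strong_induction_on with
  | _ x ih =>
    intro y
    rcases Nat.eq_zero_or_pos x with rfl | hx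
    · simp
    obtain ⟨x₀, x₁, hx', -, -, hx₁, hx₂⟩ := exists_split m
      (show x ≤ (x + m + 1).choose (m + 1) by have := le_choose_add m (x + m + 1); omega)
    obtain ⟨y₀, y₁, hy', -, -, hy₁, hy₂⟩ := exists_split m
      (show y ≤ (y + m + 1).choose (m + 1) by have := le_choose_add m (y + m + 1); omega)
    have hx₁pos : 0 < x₁ := by
      rcases Nat.eq_zero_or_pos x₁ with rfl | h
      · have := growth_pos m hx
        simp only [growth_zero_right] at hx₂
        omega
      · exact h
    have h1 := ih x₀ (by omega) y₀
    have h2 := hE (x₀ + y₀) (x₁ + y₁)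
    have h3 := hS x₁ y₁
    rw [max_eq_right (by omega), show x₀ + y₀ + (x₁ + y₁) = x + y by omega] at h2
    omega

lemma growthSubaddMod_succ {m : ℕ} (hE : EckhoffWegner m) (hS : GrowthSubaddMod m) :
    GrowthSubaddMod (m + 1) := by
  intro a
  induction a with
  | zero =>
    intro x y hx hy h
    simp only [Nat.choose_zero_succ] at hx hy h ⊢
    obtain rfl : x = 0 := by omega
    obtain rfl : y = 0 := by omega
    simp
  | succ a ih =>
    intro x y hx hy h
    rcases Nat.lt_or_ge a (m + 1) with ha | ha
    · -- here `C(a + 1, m + 1) ≤ 1`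
      have hc : (a + 1).choose (m + 1) ≤ 1 := by
        simpa using Nat.choose_le_choose (m + 1) ha
      generalize (a + 1).choose (m + 1) = c at *
      interval_cases c <;> interval_cases x <;> interval_cases y <;> simp_all
    · obtain ⟨x₀, x₁, hx', hxA, hxB, hx₁, hx₂⟩ := exists_split m hx
      obtain ⟨y₀, y₁, hy', hyA, hyB, hy₁, hy₂⟩ := exists_split m hy
      have hC : (a + 1).choose (m + 1) = a.choose (m + 1) + a.choose m := by
        rw [Nat.choose_succ_succ, add_comm]
      have hA : growth (m + 1) (a.choose (m + 1)) = a.choose m := growth_choose ha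
      have hgC := growth_choose_add ha le_rfl
      rw [hC, hgC, hx₂, hy₂]
      have hA' := ih x₀ y₀ hxA hyA
      have hB : a.choose m ≤ x₁ + y₁ := by
        by_contra hlt
        have := hA' (by omega)
        omega
      have hB' := hS a x₁ y₁ hxB hyB hB
      have h1 := hE (x₀ + y₀ - a.choose (m + 1)) (x₁ + y₁ - a.choose m)
      have h2 : growth (m + 1) (x + y - (a.choose (m + 1) + a.choose m)) ≤
          growth (m + 1) (x₀ + y₀ - a.choose (m + 1) + (x₁ + y₁ - a.choose m)) :=
        growth_mono _ (by omega)
      have h3 : growth (m + 1) (x₀ + y₀ - a.choose (m + 1)) ≤ x₁ + y₁ - a.choose m := by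
        rcases le_or_gt (a.choose (m + 1)) (x₀ + y₀) with h | h
        · have := hA' h
          omega
        · rw [Nat.sub_eq_zero_of_le h.le]
          simp
      rw [max_eq_right h3] at h1
      omega

lemma eckhoffWegner_succ {m : ℕ} (hE : EckhoffWegner m) (hS : GrowthSubadd (m + 1))
    (hM : GrowthSubaddMod (m + 1)) : EckhoffWegner (m + 1) := by
  intro k d
  rcases Nat.eq_zero_or_pos d with rfl | hd
  · simp
  rcases le_or_gt (growth (m + 1 + 1) k) d with hkd | hkd
  · rw [max_eq_right hkd]
    obtain ⟨b, s, hb, hs, rfl⟩ := exists_choose_add m hd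
    have e1 := Nat.choose_succ_succ b (m + 1)
    have e2 := Nat.choose_succ_succ b m
    simp only [Nat.succ_eq_add_one] at e1 e2
    -- the hypothesis bounds the leading term of `k` by that of `d`
    have hk : ∃ r, k ≤ b.choose (m + 1 + 1) + r ∧ growth (m + 1) r ≤ s ∧ r ≤ b.choose (m + 1) := by
      rcases Nat.eq_zero_or_pos k with rfl | hk
      · exact ⟨0, by simp⟩
      obtain ⟨a, r, ha, hr, rfl⟩ := exists_choose_add (m + 1) hk
      rw [growth_choose_add ha hr.le] at hkd
      rcases lt_trichotomy a b with hab | rfl | hab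
      · refine ⟨0, ?_, by simp, by simp⟩
        have h1 : (a + 1).choose (m + 1 + 1) ≤ b.choose (m + 1 + 1) := Nat.choose_le_choose _ hab
        rw [Nat.choose_succ_succ'] at h1
        omega
      · exact ⟨r, le_rfl, by omega, hr.le⟩
      · have h1 : (b + 1).choose (m + 1) ≤ a.choose (m + 1) := Nat.choose_le_choose _ hab
        omega
    obtain ⟨r, hkr, hrs, hrB⟩ := hk
    have h1 : growth (m + 1 + 1) (k + (b.choose (m + 1) + s)) ≤
        growth (m + 1 + 1) ((b + 1).choose (m + 1 + 1) + (r + s)) := growth_mono _ (by omega)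
    rw [growth_choose_add (by omega) (by omega)] at h1
    have h2 := hE r s
    rw [max_eq_right hrs] at h2
    rw [growth_choose_add hb hs.le]
    omega
  · rw [max_eq_left hkd.le]
    have hk : 0 < k := by
      rcases Nat.eq_zero_or_pos k with rfl | h
      · simp at hkd
      · exact h
    obtain ⟨a, r, ha, hr, rfl⟩ := exists_choose_add (m + 1) hk
    have e1 := Nat.choose_succ_succ a (m + 1)
    have e2 := Nat.choose_succ_succ a m
    simp only [Nat.succ_eq_add_one] at e1 e2
    have hgC : growth (m + 1) (a.choose (m + 1)) = a.choose m := growth_choose (by omega)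
    have hgr : growth (m + 1) r ≤ a.choose m := hgC ▸ growth_mono _ hr.le
    rw [growth_choose_add ha hr.le] at hkd ⊢
    rcases le_or_gt (r + d) (a.choose (m + 1)) with h1 | h1
    · rw [add_assoc _ r d, growth_choose_add ha h1]
      have := hS r d
      omega
    rw [show a.choose (m + 1 + 1) + r + d =
        (a + 1).choose (m + 1 + 1) + (r + d - a.choose (m + 1)) by omega,
      growth_choose_add (by omega) (by omega)]
    rcases le_or_gt (a.choose (m + 1)) d with h2 | h2
    · obtain ⟨s, rfl⟩ := Nat.exists_eq_add_of_le h2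
      have h3 := hE r s
      rw [max_eq_left (by omega)] at h3
      rw [growth_choose_add (by omega) (by omega),
        show r + (a.choose (m + 1) + s) - a.choose (m + 1) = r + s by omega]
      omega
    · have := hM a r d hr.le h2.le h1.le
      omega

lemma eckhoffWegner (m : ℕ) : EckhoffWegner m := by
  have : EckhoffWegner m ∧ GrowthSubadd m ∧ GrowthSubaddMod m := by
    induction m with
    | zero => exact ⟨eckhoffWegner_zero, by simp [GrowthSubadd], by simp [GrowthSubaddMod]⟩
    | succ m ih =>
      obtain ⟨hE, hS, hM⟩ := ih
      have hS' := growthSubadd_succ hE hS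
      have hM' := growthSubaddMod_succ hE hM
      exact ⟨eckhoffWegner_succ hE hS' hM', hS', hM'⟩
  exact this.1

lemma macUp_add_le (m k d : ℕ) :
    macUp (m + 1) (k + d) ≤ max (macUp (m + 1) k) (k + d) + macUp m d := by
  have := eckhoffWegner m k d
  simp only [macUp_eq_add_growth]
  omega

/-! ### Macaulay's lower bound -/

section Shadow

variable {n : ℕ}

/-- The products `x_j v` with `v ∈ V` and `j` in a given set `S` of active variables; `shad` and
`shadExcept` are the cases `S = univ` and `S = univ.erase i`. -/
def shadOn (S : Finset (Fin n)) (V : Finset (Fin n → ℕ)) : Finset (Fin n → ℕ) :=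
  (S ×ˢ V).image fun p => p.2 + Pi.single p.1 1

lemma mem_shadOn {S : Finset (Fin n)} {V : Finset (Fin n → ℕ)} {w : Fin n → ℕ} :
    w ∈ shadOn S V ↔ ∃ j ∈ S, ∃ v ∈ V, v + Pi.single j 1 = w := by
  simp only [shadOn, mem_image, mem_product, Prod.exists]
  constructor
  · rintro ⟨j, v, ⟨hj, hv⟩, rfl⟩
    exact ⟨j, hj, v, hv, rfl⟩
  · rintro ⟨j, hj, v, hv, rfl⟩
    exact ⟨j, v, ⟨hj, hv⟩, rfl⟩

lemma mem_mulVar {i : Fin n} {V : Finset (Fin n → ℕ)} {w : Fin n → ℕ} :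
    w ∈ mulVar i V ↔ ∃ v ∈ V, v + Pi.single i 1 = w := by
  simp [mulVar]

lemma card_mulVar (i : Fin n) (V : Finset (Fin n → ℕ)) : (mulVar i V).card = V.card :=
  card_image_of_injective _ (add_left_injective _)

/-- Splitting off the part `D` of `V` where the exponent of `x_i` has its least value `a`: the
products of `D` with the other variables are the only ones whose `x_i`-exponent is still `a`. -/
lemma card_shadOn_eq {S : Finset (Fin n)} {i : Fin n} (hi : i ∈ S) {V K D : Finset (Fin n → ℕ)}
    {a : ℕ} (hV : V = K ∪ D) (hK : ∀ v ∈ K, a < v i) (hD : ∀ v ∈ D, v i = a) :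
    (shadOn S V).card = (shadOn (S.erase i) D).card + (shadOn S K ∪ mulVar i D).card := by
  rw [← card_union_of_disjoint]
  · congr 1
    ext w
    simp only [mem_union, mem_shadOn, mem_mulVar, hV, mem_erase]
    constructor
    · rintro ⟨j, hj, v, hv | hv, rfl⟩
      · exact Or.inr (Or.inl ⟨j, hj, v, hv, rfl⟩)
      · by_cases hji : j = i
        · subst hji
          exact Or.inr (Or.inr ⟨v, hv, rfl⟩)
        · exact Or.inl ⟨j, ⟨hji, hj⟩, v, hv, rfl⟩
    · rintro (⟨j, hj, v, hv, rfl⟩ | ⟨j, hj, v, hv, rfl⟩ | ⟨v, hv, rfl⟩)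
      · exact ⟨j, hj.2, v, Or.inr hv, rfl⟩
      · exact ⟨j, hj, v, Or.inl hv, rfl⟩
      · exact ⟨i, hi, v, Or.inr hv, rfl⟩
  · rw [disjoint_left]
    intro w hw hw'
    obtain ⟨j, hj, v, hv, rfl⟩ := mem_shadOn.1 hw
    have h1 : (v + Pi.single j 1 : Fin n → ℕ) i = a := by
      simp [hD v hv, Pi.single_eq_of_ne (mem_erase.1 hj).1.symm]
    rcases mem_union.1 hw' with h | h
    · obtain ⟨j', -, v', hv', h2⟩ := mem_shadOn.1 h
      have h3 := hK v' hv'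
      rw [← h2, Pi.add_apply] at h1
      omega
    · obtain ⟨v', hv', h2⟩ := mem_mulVar.1 h
      have h3 := hD v' hv'
      rw [← h2] at h1
      simp only [Pi.add_apply, Pi.single_eq_same] at h1
      omega

/-- Macaulay's lower bound for the growth of a set of monomials in `m + 1` active variables. The
monomials may have different degrees and arbitrary exponents at the inactive variables. -/
lemma macUp_card_le_card_shadOn (m : ℕ) (S : Finset (Fin n)) (hS : S.card = m + 1)
    (V : Finset (Fin n → ℕ)) : macUp m V.card ≤ (shadOn S V).card := by
  induction m generalizing S V with
  | zero =>
    obtain ⟨i, hi⟩ := card_pos.1 (show 0 < S.card by omega)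
    rw [macUp, ← card_mulVar i V]
    refine card_le_card fun w hw => ?_
    obtain ⟨v, hv, rfl⟩ := mem_mulVar.1 hw
    exact mem_shadOn.2 ⟨i, hi, v, hv, rfl⟩
  | succ m ihm =>
    induction V using Finset.strongInduction with
    | H V ihV =>
      rcases V.eq_empty_or_nonempty with rfl | hne
      · simp [macUp_zero_right]
      obtain ⟨i, hi⟩ := card_pos.1 (show 0 < S.card by omega)
      obtain ⟨v₀, hv₀, hmin⟩ := exists_min_image V (fun v => v i) hne
      set K := V.filter fun v => v₀ i < v i with hK
      set D := V.filter fun v => v i = v₀ i with hD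
      have hVKD : V = K ∪ D := by
        ext v
        simp only [hK, hD, mem_union, mem_filter]
        constructor
        · intro hv
          have := hmin v hv
          simp only [hv, true_and]
          omega
        · rintro (h | h) <;> exact h.1
      have hdisj : Disjoint K D := by
        rw [disjoint_left]
        intro v h1 h2
        have h1 := (mem_filter.1 h1).2
        have h2 := (mem_filter.1 h2).2
        omega
      have hcard : V.card = K.card + D.card := by
        rw [← card_union_of_disjoint hdisj, ← hVKD]
      have hKV : K ⊂ V := by
        refine filter_ssubset.2 ⟨v₀, hv₀, by simp⟩
      have h1 := ihV K hKV
      have h2 := ihm (S.erase i) (by rw [card_erase_of_mem hi]; omega) D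
      rw [card_shadOn_eq hi hVKD (fun v hv => (mem_filter.1 hv).2)
        (fun v hv => (mem_filter.1 hv).2)]
      have h3 : (shadOn S K).card ≤ (shadOn S K ∪ mulVar i D).card :=
        card_le_card subset_union_left
      have h4 : V.card ≤ (shadOn S K ∪ mulVar i D).card := by
        rw [← card_mulVar i V]
        refine card_le_card fun w hw => ?_
        obtain ⟨v, hv, rfl⟩ := mem_mulVar.1 hw
        rw [hVKD, mem_union] at hv
        rcases hv with hv | hv
        · exact mem_union_left _ (mem_shadOn.2 ⟨i, hi, v, hv, rfl⟩)
        · exact mem_union_right _ (mem_mulVar.2 ⟨v, hv, rfl⟩)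
      have h5 := macUp_add_le m K.card D.card
      rw [← hcard] at h5
      omega

lemma shad_eq_shadOn (V : Finset (Fin n → ℕ)) : shad V = shadOn univ V := rfl

lemma shadExcept_eq_shadOn (i : Fin n) (V : Finset (Fin n → ℕ)) :
    shadExcept i V = shadOn (univ.erase i) V := rfl

/-! ### The sets `K_i(V)` and `D_i(V)` -/

lemma gcdMon_le {V : Finset (Fin n → ℕ)} {v : Fin n → ℕ} (hv : v ∈ V) (j : Fin n) :
    gcdMon V j ≤ v j :=
  Nat.sInf_le ⟨v, hv, rfl⟩

lemma Kset_union_Dset (V : Finset (Fin n → ℕ)) (i : Fin n) : V = Kset V i ∪ Dset V i := by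
  have : Kset V i ⊆ V := by
    unfold Kset
    split_ifs
    · exact Subset.rfl
    · exact filter_subset _ _
  rw [Dset, union_sdiff_of_subset this]

lemma mem_Kset {V : Finset (Fin n → ℕ)} {i : Fin n} (hV : 1 < V.card) {v : Fin n → ℕ} :
    v ∈ Kset V i ↔ v ∈ V ∧ gcdMon V i < v i := by
  rw [Kset, if_neg (by omega), mem_filter, and_congr_right_iff]
  intro hv
  constructor
  · intro h
    simpa using h i
  · intro h j
    rcases eq_or_ne j i with rfl | hj
    · simpa using h
    · simpa [hj] using gcdMon_le hv j

/-- The decomposition `card_shadOn_eq` for `K_i(V)` and `D_i(V)`. If `|V| ≤ 1` then `D_i(V) = ∅`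
by convention and there is nothing to split off. -/
lemma card_shad_eq (V : Finset (Fin n → ℕ)) (i : Fin n) :
    (shad V).card =
      (shadExcept i (Dset V i)).card + (shad (Kset V i) ∪ mulVar i (Dset V i)).card := by
  rcases Nat.lt_or_ge 1 V.card with hV | hV
  · refine card_shadOn_eq (mem_univ i) (Kset_union_Dset V i) (a := gcdMon V i)
      (fun v hv => ((mem_Kset hV).1 hv).2) (fun v hv => ?_)
    rw [Dset, mem_sdiff, mem_Kset hV] at hv
    have := gcdMon_le hv.1 i
    have := hv.2
    simp only [hv.1, true_and] at this
    omega
  · have hK : Kset V i = V := by rw [Kset, if_pos hV]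
    have hD : Dset V i = ∅ := by rw [Dset, hK, sdiff_self]; rfl
    simp [hK, hD, shadExcept, mulVar]

/-- Products of `K_i(V)` with `x_i` have too large an `x_i`-exponent to lie in `x_i D_i(V)`. -/
lemma mulVar_Dset_subset_iff (V : Finset (Fin n → ℕ)) (i : Fin n) :
    mulVar i (Dset V i) ⊆ shadExcept i (Kset V i) ↔ mulVar i (Dset V i) ⊆ shad (Kset V i) := by
  constructor
  · intro h w hw
    obtain ⟨j, -, v, hv, rfl⟩ := mem_shadOn.1 (h hw)
    exact mem_shadOn.2 ⟨j, mem_univ j, v, hv, rfl⟩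
  · intro h w hw
    obtain ⟨j, -, v, hv, hw'⟩ := mem_shadOn.1 (h hw)
    refine mem_shadOn.2 ⟨j, mem_erase.2 ⟨?_, mem_univ j⟩, v, hv, hw'⟩
    rintro rfl
    obtain ⟨v', hv', rfl⟩ := mem_mulVar.1 hw
    have hvv : v = v' := add_left_injective _ hw'
    subst hvv
    exact (mem_sdiff.1 hv').2 hv

end Shadow

/-- For `n ≥ 2` and a nonempty set `V` of monomials of degree `d` in
`K[x_1,…,x_n]`, equality `|MV| = |K_i(V)|^{<n-1>} + |D_i(V)|^{<n-2>}` holds iff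
`K_i(V)` is a Gotzmann set of `K[x_1,…,x_n]`, `(1/u)D_i(V)` is a Gotzmann set of
`K[x_1,…,x_{i-1},x_{i+1},…,x_n]` (i.e. `|\overline{M_i} D_i(V)| = |D_i(V)|^{<n-2>}`),
and `x_i D_i(V) ⊆ \overline{M_i} K_i(V)`. -/
theorem shad_card_eq_iff {n d : ℕ} (hn : 2 ≤ n) (V : Finset (Fin n → ℕ)) (hne : V.Nonempty)
    (hdeg : ∀ v ∈ V, ∑ i, v i = d) (i : Fin n) :
    (shad V).card = macUp (n - 1) (Kset V i).card + macUp (n - 2) (Dset V i).card ↔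
      (shad (Kset V i)).card = macUp (n - 1) (Kset V i).card ∧
        (shadExcept i (Dset V i)).card = macUp (n - 2) (Dset V i).card ∧
          mulVar i (Dset V i) ⊆ shadExcept i (Kset V i) := by
  have hK : macUp (n - 1) (Kset V i).card ≤ (shad (Kset V i)).card :=
    macUp_card_le_card_shadOn _ _ (by simp; omega) _
  have hD : macUp (n - 2) (Dset V i).card ≤ (shadExcept i (Dset V i)).card :=
    macUp_card_le_card_shadOn _ _ (by simp; omega) _
  have hle : (shad (Kset V i)).card ≤ (shad (Kset V i) ∪ mulVar i (Dset V i)).card :=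
    card_le_card subset_union_left
  have hsub : (shad (Kset V i) ∪ mulVar i (Dset V i)).card = (shad (Kset V i)).card ↔
      mulVar i (Dset V i) ⊆ shad (Kset V i) := by
    rw [← union_eq_left]
    exact ⟨fun h => (eq_of_subset_of_card_le subset_union_left h.le).symm, fun h => by rw [h]⟩
  rw [mulVar_Dset_subset_iff, ← hsub, card_shad_eq V i]
  omega
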